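/- Let (X,d) be a metric space, f : X → X a map, x ∈ X, ℓ ∈ ℕ and ε > 0. Assume the limits C_1(x,∞,ε), C_ℓ(x,∞,ε) and C_{ℓ+1}(x,∞,ε) exist. Then RR_ℓ(x,∞,ε) and P≥_ℓ(x,∞,ε) exist and RR_ℓ(x,∞,ε) = ℓ·C_ℓ(x,∞,ε) − (ℓ−1)·C_{ℓ+1}(x,∞,ε); DET_ℓ(x,∞,ε) = [ℓ·C_ℓ − (ℓ−1)·C_{ℓ+1}]/C_1 (provided C_1 > 0); if moreover C_ℓ(x,∞,ε) > 0 then L_ℓ(x,∞,ε) = ℓ + C_{ℓ+1}/(C_ℓ − C_{ℓ+1}) (with L_ℓ = ∞ if the denominator is zero); and C_ℓ(x,∞,ε) = RR_ℓ(x,∞,ε) − (ℓ−1)·P≥_ℓ(x,∞,ε). -/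

import Mathlib

open Filter Topology MeasureTheory

namespace RQA

/-- The standard metric on symbolic sequences over an alphabet `α`:
`ρ(x,y) = 2^{-min{i : x i ≠ y i}}` for `x ≠ y` and `ρ(x,x) = 0`. -/
noncomputable def seqDist {α : Type*} (x y : ℕ → α) : ℝ :=
  haveI := Classical.propDecidable (x = y)
  if x = y then 0 else (2 : ℝ) ^ (-((sInf {i : ℕ | x i ≠ y i} : ℕ) : ℤ))

/-- The (one-sided) shift on sequences. -/
def shift {α : Type*} (x : ℕ → α) : ℕ → α := fun i => x (i + 1)

/-- The embedded sequence `x^{(m)}`, a sequence over the alphabet `α^m`. -/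
def embedSeq {α : Type*} (m : ℕ) (x : ℕ → α) : ℕ → (Fin m → α) :=
  fun j t => x (j + (t : ℕ))

section RQAdefs

variable {X : Type*} (d : X → X → ℝ) (f : X → X) (x : X)

/-- The entry of the recurrence plot at `(i,j)` equals `1`. -/
def RPone (ε : ℝ) (i j : ℕ) : Prop := d (f^[i] x) (f^[j] x) ≤ ε

/-- `(i, j, l)` is a diagonal line in the recurrence plot `RP(x, n, ε)`. -/
def IsLine (n : ℕ) (ε : ℝ) (i j l : ℕ) : Prop :=
  1 ≤ l ∧ i + l ≤ n ∧ j + l ≤ n ∧ i ≠ j ∧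
  (∀ h, h < l → RPone d f x ε (i + h) (j + h)) ∧
  (0 < i → 0 < j → ¬ RPone d f x ε (i - 1) (j - 1)) ∧
  (max i j + l < n → ¬ RPone d f x ε (i + l) (j + l))

/-- `N_l(x, n, ε)`: the number of diagonal lines of length exactly `l`. -/
noncomputable def Nlines (n : ℕ) (ε : ℝ) (l : ℕ) : ℕ :=
  Set.ncard {p : ℕ × ℕ | IsLine d f x n ε p.1 p.2 l}

/-- `P_l(x, n, ε) = N_l/(n² − n)`. -/
noncomputable def Pline (n : ℕ) (ε : ℝ) (l : ℕ) : ℝ :=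
  (Nlines d f x n ε l : ℝ) / ((n : ℝ) ^ 2 - (n : ℝ))

/-- `P≥_ℓ(x, n, ε) = Σ_{l ≥ ℓ} P_l`. -/
noncomputable def PlineGe (n : ℕ) (ε : ℝ) (ℓ : ℕ) : ℝ :=
  ∑' k : ℕ, Pline d f x n ε (ℓ + k)

/-- The recurrence rate `RR_ℓ(x, n, ε) = Σ_{l ≥ ℓ} l · P_l`. -/
noncomputable def RRate (n : ℕ) (ε : ℝ) (ℓ : ℕ) : ℝ :=
  ∑' k : ℕ, ((ℓ + k : ℕ) : ℝ) * Pline d f x n ε (ℓ + k)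

/-- The determinism `DET_ℓ(x, n, ε) = RR_ℓ/RR_1`. -/
noncomputable def DETrm (n : ℕ) (ε : ℝ) (ℓ : ℕ) : ℝ :=
  RRate d f x n ε ℓ / RRate d f x n ε 1

/-- The average line length `L_ℓ(x, n, ε) = RR_ℓ/P≥_ℓ`. -/
noncomputable def LAvg (n : ℕ) (ε : ℝ) (ℓ : ℕ) : ℝ :=
  RRate d f x n ε ℓ / PlineGe d f x n ε ℓ

/-- The entropy of line lengths
`ENT_ℓ(x, n, ε) = log P≥_ℓ − (1/P≥_ℓ)·Σ_{l≥ℓ} P_l · log P_l` (with `0·log 0 = 0`). -/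
noncomputable def ENTln (n : ℕ) (ε : ℝ) (ℓ : ℕ) : ℝ :=
  Real.log (PlineGe d f x n ε ℓ) -
    (PlineGe d f x n ε ℓ)⁻¹ *
      ∑' k : ℕ, Pline d f x n ε (ℓ + k) * Real.log (Pline d f x n ε (ℓ + k))

/-- The correlation sum
`C_ℓ(x, n, ε) = n^{-2}·#{(i,j) ∈ [0,n)² : d_ℓ(f^i x, f^j x) ≤ ε}`,
where `d_ℓ` is the Bowen metric. -/
noncomputable def corrSum (ℓ n : ℕ) (ε : ℝ) : ℝ :=
  (Set.ncard {p : ℕ × ℕ | p.1 < n ∧ p.2 < n ∧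
      ∀ k, k < ℓ → d (f^[p.1 + k] x) (f^[p.2 + k] x) ≤ ε} : ℝ) / (n : ℝ) ^ 2

end RQAdefs

/-- The extension of a substitution to a morphism of the free monoid of finite words. -/
def substWord (ζ : Bool → List Bool) : List Bool → List Bool :=
  fun w => w.foldr (fun a r => ζ a ++ r) []

/-- `ζ` is a (binary) substitution of constant length `q ≥ 2`. -/
def IsConstLenSubst (ζ : Bool → List Bool) (q : ℕ) : Prop :=
  2 ≤ q ∧ ∀ a : Bool, (ζ a).length = q

/-- The language `L_ζ`: subwords of the words `ζ^k(a)`, `a ∈ A`, `k ≥ 1`. -/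
def substLang (ζ : Bool → List Bool) : Set (List Bool) :=
  {w | ∃ a : Bool, ∃ k : ℕ, 1 ≤ k ∧ w <:+: (substWord ζ)^[k] [a]}

/-- The substitution subshift `X_ζ`. -/
def SubstShift (ζ : Bool → List Bool) : Set (ℕ → Bool) :=
  {y | ∀ n : ℕ, (List.ofFn fun t : Fin n => y (t : ℕ)) ∈ substLang ζ}

/-- `ζ` is primitive. -/
def IsPrimitive (ζ : Bool → List Bool) : Prop :=
  ∃ k : ℕ, 1 ≤ k ∧ ∀ a b : Bool, b ∈ (substWord ζ)^[k] [a]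

/-- `ζ` is aperiodic: `X_ζ` contains a non-periodic sequence. -/
def IsAperiodic (ζ : Bool → List Bool) : Prop :=
  ∃ y ∈ SubstShift ζ, ∀ p : ℕ, 1 ≤ p → ∃ i : ℕ, y (i + p) ≠ y i

/-- The action of a constant length-`q` substitution on infinite sequences. -/
def substSeq (ζ : Bool → List Bool) (q : ℕ) (x : ℕ → Bool) : ℕ → Bool :=
  fun i => (ζ (x (i / q))).getD (i % q) false

/-- `(i, j, l)` is a line in the infinite symbolic recurrence plot `RP(x, ∞, ε₀)`. -/
def IsInfLine (x : ℕ → Bool) (i j l : ℕ) : Prop :=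
  1 ≤ l ∧ i ≠ j ∧ (∀ h, h < l → x (i + h) = x (j + h)) ∧
  (0 < i → 0 < j → x (i - 1) ≠ x (j - 1)) ∧ x (i + l) ≠ x (j + l)

/-- `K_l`: the set of starting points `(i,j)`, `i,j ≥ 1`, of inner lines of length `l`
in the infinite symbolic recurrence plot. -/
def Kset (x : ℕ → Bool) (l : ℕ) : Set (ℕ × ℕ) :=
  {p | 1 ≤ p.1 ∧ 1 ≤ p.2 ∧ IsInfLine x p.1 p.2 l}

/-- `#(M ∩ [0,n)²)/n²`. -/
noncomputable def densCount (M : Set (ℕ × ℕ)) (n : ℕ) : ℝ :=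
  (Set.ncard (M ∩ {p : ℕ × ℕ | p.1 < n ∧ p.2 < n}) : ℝ) / (n : ℝ) ^ 2

/-- `M ⊆ ℕ²` has asymptotic density `a`. -/
def HasDens (M : Set (ℕ × ℕ)) (a : ℝ) : Prop :=
  Tendsto (densCount M) atTop (𝓝 a)

/-- `δ_l(n) = #(K_l ∩ [1,n)²)/(n² − n)`. -/
noncomputable def deltaK (x : ℕ → Bool) (l n : ℕ) : ℝ :=
  (Set.ncard (Kset x l ∩ {p : ℕ × ℕ | p.1 < n ∧ p.2 < n}) : ℝ) / ((n : ℝ) ^ 2 - (n : ℝ))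

/-- `M` is a minimal subset of the subshift `Y`. -/
def IsMinimalSubset (Y M : Set (ℕ → Bool)) : Prop :=
  M ⊆ Y ∧ M.Nonempty ∧ IsClosed M ∧ (∀ z ∈ M, shift z ∈ M) ∧
  ∀ M' : Set (ℕ → Bool), M' ⊆ M → M'.Nonempty → IsClosed M' →
    (∀ z ∈ M', shift z ∈ M') → M' = M

end RQA

open RQA

/-- windows of length `l` off the main diagonal inside the plot -/
def winSet (R : ℕ → ℕ → Prop) (n l : ℕ) : Set (ℕ × ℕ) :=
  {p | p.1 + l ≤ n ∧ p.2 + l ≤ n ∧ p.1 ≠ p.2 ∧ ∀ h, h < l → R (p.1 + h) (p.2 + h)}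

/-- diagonal shift -/
def dsh (p : ℕ × ℕ) : ℕ × ℕ := (p.1 + 1, p.2 + 1)

lemma dsh_inj : Function.Injective dsh := by
  rintro ⟨a, b⟩ ⟨c, e⟩ h
  simp only [dsh, Prod.mk.injEq] at h ⊢
  omega

lemma box_finite (n : ℕ) : ({p : ℕ × ℕ | p.1 ≤ n ∧ p.2 ≤ n}).Finite := by
  refine ((Set.finite_Iic n).prod (Set.finite_Iic n)).subset ?_
  rintro ⟨a, b⟩ h
  simpa using h

lemma winSet_finite (R : ℕ → ℕ → Prop) (n l : ℕ) : (winSet R n l).Finite := by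
  refine (box_finite n).subset ?_
  rintro ⟨a, b⟩ ⟨h1, h2, -⟩
  simp only [Set.mem_setOf_eq] at *
  omega

lemma winSet_empty (R : ℕ → ℕ → Prop) (n l : ℕ) (h : n ≤ l) : (winSet R n l).ncard = 0 := by
  rw [Set.ncard_eq_zero (winSet_finite R n l)]
  ext ⟨a, b⟩
  simp only [winSet, Set.mem_setOf_eq, Set.mem_empty_iff_false, iff_false]
  rintro ⟨h1, h2, h3, -⟩
  omega

lemma winSet_succ_sub (R : ℕ → ℕ → Prop) (n l : ℕ) : winSet R n (l + 1) ⊆ winSet R n l := by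
  rintro ⟨a, b⟩ ⟨h1, h2, h3, h4⟩
  simp only at *
  exact ⟨by simp only; omega, by simp only; omega, h3, fun h hh => h4 h (by omega)⟩

lemma dsh_winSet_sub (R : ℕ → ℕ → Prop) (n l : ℕ) :
    dsh '' winSet R n (l + 1) ⊆ winSet R n l := by
  rintro _ ⟨⟨a, b⟩, ⟨h1, h2, h3, h4⟩, rfl⟩
  simp only at *
  refine ⟨by simp only [dsh]; omega, by simp only [dsh]; omega, by simp only [dsh]; omega, ?_⟩
  intro h hh
  have := h4 (h + 1) (by omega)
  simp only [dsh]
  rwa [show a + 1 + h = a + (h + 1) by omega, show b + 1 + h = b + (h + 1) by omega]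

lemma winSet_inter (R : ℕ → ℕ → Prop) (n l : ℕ) :
    winSet R n (l + 1) ∩ dsh '' winSet R n (l + 1) = dsh '' winSet R n (l + 2) := by
  ext p
  constructor
  · rintro ⟨h, ⟨⟨a, b⟩, ⟨h1, h2, h3, h4⟩, rfl⟩⟩
    obtain ⟨k1, k2, k3, k4⟩ := h
    simp only [dsh] at *
    refine ⟨(a, b), ⟨by simp only; omega, by simp only; omega, h3, ?_⟩, rfl⟩
    intro h hh
    rcases Nat.eq_zero_or_pos h with rfl | hp
    · exact h4 0 (by omega)
    · have := k4 (h - 1) (by omega)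
      simp only
      rwa [show a + 1 + (h - 1) = a + h by omega, show b + 1 + (h - 1) = b + h by omega] at this
  · intro h
    exact ⟨dsh_winSet_sub R n (l + 1) h, Set.image_mono (winSet_succ_sub R n (l + 1)) h⟩

section
variable {X : Type*} (d : X → X → ℝ) (f : X → X) (x : X)

lemma line_set_eq (n : ℕ) (ε : ℝ) (l : ℕ) (hl : 1 ≤ l) :
    {p : ℕ × ℕ | IsLine d f x n ε p.1 p.2 l} =
      winSet (RPone d f x ε) n l \
        (winSet (RPone d f x ε) n (l + 1) ∪ dsh '' winSet (RPone d f x ε) n (l + 1)) := by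
  ext ⟨i, j⟩
  simp only [Set.mem_setOf_eq, Set.mem_sdiff, Set.mem_union, not_or]
  constructor
  · rintro ⟨-, h1, h2, h3, h4, h5, h6⟩
    refine ⟨⟨h1, h2, h3, h4⟩, ?_, ?_⟩
    · rintro ⟨k1, k2, -, k4⟩
      simp only at *
      exact h6 (by omega) (k4 l (by omega))
    · rintro ⟨⟨a, b⟩, ⟨k1, k2, k3, k4⟩, he⟩
      simp only [dsh, Prod.mk.injEq] at *
      obtain ⟨rfl, rfl⟩ := he
      exact h5 (by omega) (by omega) (k4 0 (by omega))
  · rintro ⟨⟨h1, h2, h3, h4⟩, h5, h6⟩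
    simp only at *
    refine ⟨hl, h1, h2, h3, h4, ?_, ?_⟩
    · intro hi hj hR
      apply h6
      refine ⟨(i - 1, j - 1), ⟨by simp only; omega, by simp only; omega, by simp only; omega, ?_⟩, ?_⟩
      · intro h hh
        simp only
        rcases Nat.eq_zero_or_pos h with rfl | hp
        · exact hR
        · have := h4 (h - 1) (by omega)
          rwa [show i - 1 + h = i + (h - 1) by omega, show j - 1 + h = j + (h - 1) by omega]
      · simp only [dsh, Prod.mk.injEq]; omega
    · intro hm hR
      apply h5
      refine ⟨by simp only; omega, by simp only; omega, h3, ?_⟩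
      intro h hh
      rcases Nat.lt_or_ge h l with hp | hp
      · exact h4 h hp
      · obtain rfl : h = l := by omega
        exact hR

/-- number of windows -/
noncomputable def Aw (n : ℕ) (ε : ℝ) (l : ℕ) : ℝ := ((winSet (RPone d f x ε) n l).ncard : ℝ)

lemma Nlines_eq (n : ℕ) (ε : ℝ) (l : ℕ) (hl : 1 ≤ l) :
    (Nlines d f x n ε l : ℝ) =
      Aw d f x n ε l - 2 * Aw d f x n ε (l + 1) + Aw d f x n ε (l + 2) := by
  unfold Nlines Aw
  rw [line_set_eq d f x n ε l hl]
  set R := RPone d f x ε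
  have hf := winSet_finite R n (l + 1)
  have e1 := Set.ncard_union_add_ncard_inter (winSet R n (l + 1)) (dsh '' winSet R n (l + 1)) hf
    (hf.image _)
  rw [winSet_inter, Set.ncard_image_of_injective _ dsh_inj,
    Set.ncard_image_of_injective _ dsh_inj] at e1
  have e2 := Set.ncard_sdiff_add_ncard_of_subset
    (Set.union_subset (winSet_succ_sub R n l) (dsh_winSet_sub R n l)) (winSet_finite R n l)
  have e1' : (_ : ℝ) = _ := congrArg (Nat.cast (R := ℝ)) e1
  have e2' : (_ : ℝ) = _ := congrArg (Nat.cast (R := ℝ)) e2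
  push_cast at e1' e2'
  linarith

lemma Aw_zero (n : ℕ) (ε : ℝ) (l : ℕ) (h : n ≤ l) : Aw d f x n ε l = 0 := by
  simp [Aw, winSet_empty _ n l h]

lemma Pline_eq (n : ℕ) (ε : ℝ) (l : ℕ) (hl : 1 ≤ l) :
    Pline d f x n ε l = (Aw d f x n ε l - 2 * Aw d f x n ε (l + 1) + Aw d f x n ε (l + 2)) /
      ((n : ℝ) ^ 2 - n) := by
  rw [Pline, Nlines_eq d f x n ε l hl]

lemma Pline_zero (n : ℕ) (ε : ℝ) (l : ℕ) (hl : 1 ≤ l) (h : n ≤ l) : Pline d f x n ε l = 0 := by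
  rw [Pline_eq d f x n ε l hl, Aw_zero _ _ _ _ _ _ h, Aw_zero _ _ _ _ _ (l + 1) (by omega),
    Aw_zero _ _ _ _ _ (l + 2) (by omega)]
  simp

lemma PlineGe_sum (n : ℕ) (ε : ℝ) (l : ℕ) (hl : 1 ≤ l) :
    PlineGe d f x n ε l = ∑ k ∈ Finset.range n, Pline d f x n ε (l + k) := by
  refine tsum_eq_sum fun k hk => Pline_zero _ _ _ _ _ _ (by omega) ?_
  simp at hk; omega

lemma RRate_sum (n : ℕ) (ε : ℝ) (l : ℕ) (hl : 1 ≤ l) :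
    RRate d f x n ε l = ∑ k ∈ Finset.range n, ((l + k : ℕ) : ℝ) * Pline d f x n ε (l + k) := by
  refine tsum_eq_sum fun k hk => ?_
  rw [Pline_zero _ _ _ _ _ _ (by omega) (by simp at hk; omega), mul_zero]

lemma PlineGe_eq (n : ℕ) (ε : ℝ) (l : ℕ) (hl : 1 ≤ l) :
    PlineGe d f x n ε l = (Aw d f x n ε l - Aw d f x n ε (l + 1)) / ((n : ℝ) ^ 2 - n) := by
  have key : ∀ K : ℕ, ∑ k ∈ Finset.range K, Pline d f x n ε (l + k) =
      (Aw d f x n ε l - Aw d f x n ε (l + 1) - Aw d f x n ε (l + K) + Aw d f x n ε (l + K + 1)) /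
        ((n : ℝ) ^ 2 - n) := by
    intro K
    induction K with
    | zero => simp
    | succ K ih =>
      rw [Finset.sum_range_succ, ih, Pline_eq d f x n ε (l + K) (by omega), ← add_assoc]
      ring
  rw [PlineGe_sum d f x n ε l hl, key, Aw_zero _ _ _ _ _ (l + n) (by omega),
    Aw_zero _ _ _ _ _ (l + n + 1) (by omega)]
  ring

lemma RRate_eq (n : ℕ) (ε : ℝ) (l : ℕ) (hl : 1 ≤ l) :
    RRate d f x n ε l = ((l : ℝ) * Aw d f x n ε l - ((l : ℝ) - 1) * Aw d f x n ε (l + 1)) /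
      ((n : ℝ) ^ 2 - n) := by
  have key : ∀ K : ℕ, ∑ k ∈ Finset.range K, ((l + k : ℕ) : ℝ) * Pline d f x n ε (l + k) =
      ((l : ℝ) * Aw d f x n ε l - ((l : ℝ) - 1) * Aw d f x n ε (l + 1)
        - ((l : ℝ) + K) * Aw d f x n ε (l + K) + ((l : ℝ) + K - 1) * Aw d f x n ε (l + K + 1)) /
        ((n : ℝ) ^ 2 - n) := by
    intro K
    induction K with
    | zero => simp
    | succ K ih =>
      rw [Finset.sum_range_succ, ih, Pline_eq d f x n ε (l + K) (by omega), ← add_assoc]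
      push_cast
      ring
  rw [RRate_sum d f x n ε l hl, key, Aw_zero _ _ _ _ _ (l + n) (by omega),
    Aw_zero _ _ _ _ _ (l + n + 1) (by omega)]
  ring

lemma PlineGe_pos_of_RRate_pos (n : ℕ) (ε : ℝ) (l : ℕ) (hl : 1 ≤ l)
    (h : 0 < RRate d f x n ε l) : 0 < PlineGe d f x n ε l := by
  have hD : (0 : ℝ) ≤ (n : ℝ) ^ 2 - n := by
    rcases Nat.eq_zero_or_pos n with rfl | hn
    · simp
    · have : (1 : ℝ) ≤ n := by exact_mod_cast hn
      nlinarith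
  have hP : ∀ k, 0 ≤ Pline d f x n ε k := fun k => div_nonneg (Nat.cast_nonneg _) hD
  rw [PlineGe_sum d f x n ε l hl]
  rw [RRate_sum d f x n ε l hl] at h
  by_contra hcon
  have h0 : ∑ k ∈ Finset.range n, Pline d f x n ε (l + k) = 0 :=
    le_antisymm (not_lt.mp hcon) (Finset.sum_nonneg fun k _ => hP _)
  rw [Finset.sum_eq_zero_iff_of_nonneg fun k _ => hP _] at h0
  rw [Finset.sum_eq_zero fun k hk => by rw [h0 k hk, mul_zero]] at h
  exact lt_irrefl _ h

/-- unnormalized correlation set -/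
def corrSet (l n : ℕ) (ε : ℝ) : Set (ℕ × ℕ) :=
  {p : ℕ × ℕ | p.1 < n ∧ p.2 < n ∧ ∀ k, k < l → d (f^[p.1 + k] x) (f^[p.2 + k] x) ≤ ε}

lemma win_sub_corr (l n : ℕ) (ε : ℝ) (hl : 1 ≤ l) :
    winSet (RPone d f x ε) n l ⊆ corrSet d f x l n ε := by
  rintro ⟨a, b⟩ ⟨h1, h2, h3, h4⟩
  simp only at *
  exact ⟨by simp only; omega, by simp only; omega, h4⟩

lemma corr_sub (l n : ℕ) (ε : ℝ) :
    corrSet d f x l n ε ⊆ winSet (RPone d f x ε) n l ∪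
      (((Finset.range n).image (fun i => (i, i)) ∪
        (Finset.Ico (n - l) n ×ˢ Finset.range n ∪ Finset.range n ×ˢ Finset.Ico (n - l) n) :
        Finset (ℕ × ℕ)) : Set (ℕ × ℕ)) := by
  rintro ⟨a, b⟩ ⟨h1, h2, h3⟩
  simp only at h1 h2 h3
  by_cases h : a + l ≤ n ∧ b + l ≤ n ∧ a ≠ b
  · exact Or.inl ⟨h.1, h.2.1, h.2.2, h3⟩
  · right
    simp only [Finset.coe_union, Finset.coe_image, Finset.coe_product, Finset.coe_Ico, Finset.coe_range, Set.mem_union, Set.mem_image,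
      Set.mem_prod, Set.mem_Ico, Set.mem_Iio, Prod.mk.injEq]
    by_cases hab : a = b
    · left; exact ⟨a, h1, rfl, hab⟩
    · right; omega

lemma corr_bound (l n : ℕ) (ε : ℝ) :
    ((corrSet d f x l n ε).ncard : ℝ) ≤ Aw d f x n ε l + (1 + 2 * l) * n := by
  have h := Set.ncard_le_ncard (corr_sub d f x l n ε)
    ((winSet_finite _ n l).union (Finset.finite_toSet _))
  have h2 := h.trans (Set.ncard_union_le _ _)
  rw [Set.ncard_coe_finset] at h2
  have c : ((Finset.range n).image (fun i => (i, i)) ∪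
        (Finset.Ico (n - l) n ×ˢ Finset.range n ∪ Finset.range n ×ˢ Finset.Ico (n - l) n) :
        Finset (ℕ × ℕ)).card ≤ n + (l * n + n * l) := by
    refine (Finset.card_union_le _ _).trans (add_le_add ?_ ((Finset.card_union_le _ _).trans
      (add_le_add ?_ ?_)))
    · exact Finset.card_image_le.trans (by simp)
    · rw [Finset.card_product, Nat.card_Ico, Finset.card_range]
      exact Nat.mul_le_mul_right _ (by omega)
    · rw [Finset.card_product, Nat.card_Ico, Finset.card_range]
      exact Nat.mul_le_mul_left _ (by omega)
  have h3 := h2.trans (Nat.add_le_add_left c _)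
  have h4 : (_ : ℝ) ≤ _ := Nat.cast_le (α := ℝ).mpr h3
  push_cast at h4
  unfold Aw
  linarith

lemma Aw_tendsto (l : ℕ) (hl : 1 ≤ l) (ε C : ℝ)
    (hC : Tendsto (fun n : ℕ => corrSum d f x l n ε) atTop (𝓝 C)) :
    Tendsto (fun n : ℕ => Aw d f x n ε l / ((n : ℝ) ^ 2 - n)) atTop (𝓝 C) := by
  have hinv : Tendsto (fun n : ℕ => (1 + 2 * (l : ℝ)) / (n : ℝ)) atTop (𝓝 0) :=
    tendsto_const_div_atTop_nhds_zero_nat _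
  have h1 : Tendsto (fun n : ℕ => Aw d f x n ε l / (n : ℝ) ^ 2) atTop (𝓝 C) := by
    refine tendsto_of_tendsto_of_tendsto_of_le_of_le'
      (by simpa using hC.sub hinv) hC ?_ ?_
    · filter_upwards [eventually_gt_atTop 0] with n hn
      have hn' : (0 : ℝ) < n := by exact_mod_cast hn
      have := corr_bound d f x l n ε
      change ((corrSet d f x l n ε).ncard : ℝ) / (n : ℝ) ^ 2 - _ ≤ _
      rw [show (1 + 2 * (l : ℝ)) / (n : ℝ) = ((1 + 2 * l) * n) / (n : ℝ) ^ 2 by field_simp,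
        ← sub_div]
      gcongr
      linarith
    · filter_upwards with n
      change _ ≤ ((corrSet d f x l n ε).ncard : ℝ) / (n : ℝ) ^ 2
      unfold Aw
      gcongr
      · refine (box_finite n).subset ?_
        rintro ⟨a, b⟩ ⟨h1, h2, -⟩
        exact ⟨le_of_lt h1, le_of_lt h2⟩
      · exact win_sub_corr d f x l n ε hl
  have h2 : Tendsto (fun n : ℕ => (1 - 1 / (n : ℝ))⁻¹) atTop (𝓝 1) := by
    have : Tendsto (fun n : ℕ => 1 - 1 / (n : ℝ)) atTop (𝓝 (1 - 0)) :=
      tendsto_const_nhds.sub (tendsto_const_div_atTop_nhds_zero_nat 1)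
    simpa using this.inv₀ (by norm_num)
  have h3 := h1.mul h2
  rw [mul_one] at h3
  refine h3.congr' ?_
  filter_upwards [eventually_gt_atTop 1] with n hn
  have hn' : (1 : ℝ) < n := by exact_mod_cast hn
  have : (n : ℝ) - 1 ≠ 0 := by linarith
  have h0 : (n : ℝ) ≠ 0 := by linarith
  rw [show (n : ℝ) ^ 2 - n = n ^ 2 * (1 - 1 / n) by field_simp, ← div_div, ← div_eq_mul_inv]

end


/-- Asymptotic recurrence quantifiers via correlation sums:
if C_1(x,∞,ε), C_ℓ(x,∞,ε), C_{ℓ+1}(x,∞,ε) exist, then RR_ℓ(x,∞,ε) and P≥_ℓ(x,∞,ε)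
exist, RR_ℓ(∞) = ℓC_ℓ − (ℓ−1)C_{ℓ+1}, DET_ℓ(∞) = [ℓC_ℓ − (ℓ−1)C_{ℓ+1}]/C_1,
L_ℓ(∞) = ℓ + C_{ℓ+1}/(C_ℓ − C_{ℓ+1}) when C_ℓ > 0 (L_ℓ(∞) = ∞ if the denominator
vanishes), and C_ℓ = RR_ℓ(∞) − (ℓ−1)·P≥_ℓ(∞). -/
theorem asymptotic_quantifiers_via_corrSum
    {X : Type*} [MetricSpace X] (f : X → X) (x : X)
    (ℓ : ℕ) (hℓ : 1 ≤ ℓ) (ε : ℝ) (hε : 0 < ε) (C1 Cl Cl1 : ℝ)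
    (hC1 : Tendsto (fun n : ℕ => corrSum dist f x 1 n ε) atTop (𝓝 C1))
    (hCl : Tendsto (fun n : ℕ => corrSum dist f x ℓ n ε) atTop (𝓝 Cl))
    (hCl1 : Tendsto (fun n : ℕ => corrSum dist f x (ℓ + 1) n ε) atTop (𝓝 Cl1)) :
    Tendsto (fun n : ℕ => RRate dist f x n ε ℓ) atTop
      (𝓝 ((ℓ : ℝ) * Cl - ((ℓ : ℝ) - 1) * Cl1)) ∧
    (∃ Pg : ℝ, Tendsto (fun n : ℕ => PlineGe dist f x n ε ℓ) atTop (𝓝 Pg) ∧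
      Cl = ((ℓ : ℝ) * Cl - ((ℓ : ℝ) - 1) * Cl1) - ((ℓ : ℝ) - 1) * Pg) ∧
    (0 < C1 →
      Tendsto (fun n : ℕ => DETrm dist f x n ε ℓ) atTop
        (𝓝 (((ℓ : ℝ) * Cl - ((ℓ : ℝ) - 1) * Cl1) / C1))) ∧
    (0 < Cl →
      (Cl - Cl1 ≠ 0 →
        Tendsto (fun n : ℕ => LAvg dist f x n ε ℓ) atTop
          (𝓝 ((ℓ : ℝ) + Cl1 / (Cl - Cl1)))) ∧
      (Cl - Cl1 = 0 →
        Tendsto (fun n : ℕ => LAvg dist f x n ε ℓ) atTop atTop)) := by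
  have hRR : ∀ (l : ℕ), 1 ≤ l → ∀ A B : ℝ,
      Tendsto (fun n : ℕ => Aw dist f x n ε l / ((n : ℝ) ^ 2 - n)) atTop (𝓝 A) →
      Tendsto (fun n : ℕ => ((l : ℝ) - 1) * (Aw dist f x n ε (l + 1) / ((n : ℝ) ^ 2 - n))) atTop
        (𝓝 B) →
      Tendsto (fun n : ℕ => RRate dist f x n ε l) atTop (𝓝 ((l : ℝ) * A - B)) := by
    intro l hl A B hA hB
    refine ((hA.const_mul (l : ℝ)).sub hB).congr fun n => ?_
    rw [RRate_eq dist f x n ε l hl]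
    ring
  have a1 := Aw_tendsto dist f x 1 le_rfl ε C1 hC1
  have al := Aw_tendsto dist f x ℓ hℓ ε Cl hCl
  have al1 := Aw_tendsto dist f x (ℓ + 1) (by omega) ε Cl1 hCl1
  have R := hRR ℓ hℓ Cl _ al (al1.const_mul ((ℓ : ℝ) - 1))
  have R1 : Tendsto (fun n : ℕ => RRate dist f x n ε 1) atTop (𝓝 C1) := by
    have := hRR 1 le_rfl C1 0 a1 (by simp)
    simpa using this
  have P : Tendsto (fun n : ℕ => PlineGe dist f x n ε ℓ) atTop (𝓝 (Cl - Cl1)) := by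
    refine (al.sub al1).congr fun n => ?_
    rw [PlineGe_eq dist f x n ε ℓ hℓ]
    ring
  refine ⟨R, ⟨Cl - Cl1, P, by ring⟩, fun h => R.div R1 h.ne', fun h => ⟨fun hne => ?_, fun he => ?_⟩⟩
  · have := R.div P hne
    rwa [show ((ℓ : ℝ) * Cl - ((ℓ : ℝ) - 1) * Cl1) / (Cl - Cl1) = (ℓ : ℝ) + Cl1 / (Cl - Cl1) by
      field_simp; ring] at this
  · have hpos : 0 < (ℓ : ℝ) * Cl - ((ℓ : ℝ) - 1) * Cl1 := by
      have : Cl1 = Cl := by linarith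
      rw [this]; linarith
    have hev : ∀ᶠ n in atTop, 0 < PlineGe dist f x n ε ℓ :=
      (R.eventually (lt_mem_nhds hpos)).mono fun n hn =>
        PlineGe_pos_of_RRate_pos dist f x n ε ℓ hℓ hn
    rw [he] at P
    have P' : Tendsto (fun n : ℕ => PlineGe dist f x n ε ℓ) atTop (𝓝[>] 0) :=
      tendsto_nhdsWithin_iff.mpr ⟨P, hev⟩
    have := R.pos_mul_atTop hpos P'.inv_tendsto_nhdsGT_zero
    exact this.congr fun n => (div_eq_mul_inv _ _).symm
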